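/- arXiv:2210.06692 — 6 statements merged into one kernel-verified Lean document; each statement's English description precedes it below -/
import Mathlib

section
/- (Theorem 1, Policy Evaluation) The (N,k)-pessimistic Bellman operator is a γ-contraction for the sup norm: for all Q1, Q2 : S × A → ℝ, ‖B^π_{N,k} Q1 − B^π_{N,k} Q2‖_∞ ≤ γ · ‖Q1 − Q2‖_∞. Consequently B^π_{N,k} has a unique fixed point Q^π_{N,k}, and for any starting Q the iterates (B^π_{N,k})^n Q converge to Q^π_{N,k} in sup norm. -/
/-- `kmin x k` is the entry in position `k` (0-indexed) of a monotone nondecreasing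
sorted arrangement of the tuple `x`, i.e. the `(k+1)`-th smallest entry counted with
multiplicity. -/
noncomputable def kmin {N : ℕ} (x : Fin N → ℝ) (k : Fin N) : ℝ := x (Tuple.sort x k)

/-- A probability mass function on a finite type: nonnegative and summing to one. -/
def IsPMF {α : Type*} [Fintype α] (p : α → ℝ) : Prop :=
  (∀ a, 0 ≤ p a) ∧ ∑ a, p a = 1

/-- Sup norm `‖Q‖_∞ = max_{(s,a)} |Q(s,a)|` on `S × A → ℝ` (curried). -/
noncomputable def supNorm {S A : Type*} [Fintype S] [Fintype A] [Nonempty S] [Nonempty A]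
    (Q : S → A → ℝ) : ℝ :=
  Finset.univ.sup' Finset.univ_nonempty (fun p : S × A => |Q p.1 p.2|)

/-- The `(N,k)`-pessimistic Bellman operator (with `k` given 0-indexed as `k : Fin N`):
`(B^π_{N,k} Q)(s,a) = r(s,a) + γ · Σ_{v : Fin N → ι} (Π_j P(v_j)) ·
  kmin_k( j ↦ Σ_{s'} M(v_j)(s,a)(s') · Σ_{a'} π(a'|s') · Q(s',a') )`. -/
noncomputable def pessBellman {S A ι : Type*} [Fintype S] [Fintype A] [Fintype ι]
    (r : S → A → ℝ) (γ : ℝ) (P : ι → ℝ) (M : ι → S → A → S → ℝ)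
    (π : S → A → ℝ) (N : ℕ) (k : Fin N) (Q : S → A → ℝ) : S → A → ℝ :=
  fun s a => r s a + γ * ∑ v : Fin N → ι, (∏ j, P (v j)) *
    kmin (fun j => ∑ s', M (v j) s a s' * ∑ a', π s' a' * Q s' a') k

theorem kmin_le_add {N : ℕ} (x y : Fin N → ℝ) (c : ℝ) (h : ∀ j, x j ≤ y j + c) (k : Fin N) :
    kmin x k ≤ kmin y k + c := by
  obtain ⟨i, hi, hl⟩ : ∃ i, i ≤ k ∧ k ≤ (Tuple.sort x).symm (Tuple.sort y i) := by
    by_contra hcon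
    push Not at hcon
    have hc := Finset.card_le_card_of_injOn (s := Finset.Iic k) (t := Finset.Iio k)
      (fun i => (Tuple.sort x).symm (Tuple.sort y i))
      (fun i hi => by
        have hi' : i ≤ k := by simpa using hi
        simpa using hcon i hi')
      (fun a _ b _ hab => by simpa using hab)
    simp at hc
  have h1 := Tuple.monotone_sort x hl
  have h2 := Tuple.monotone_sort y hi
  simp only [Function.comp, Equiv.apply_symm_apply] at h1 h2
  unfold kmin
  linarith [h (Tuple.sort y i)]

theorem IsPMF.abs_sum_sub_le {α : Type*} [Fintype α] {p : α → ℝ} (hp : IsPMF p)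
    (f g : α → ℝ) (c : ℝ) (h : ∀ a, |f a - g a| ≤ c) :
    |∑ a, p a * f a - ∑ a, p a * g a| ≤ c := by
  rw [← Finset.sum_sub_distrib]
  calc |∑ a, (p a * f a - p a * g a)| ≤ ∑ a, |p a * f a - p a * g a| :=
        Finset.abs_sum_le_sum_abs _ _
    _ ≤ ∑ a, p a * c := by
        refine Finset.sum_le_sum fun a _ => ?_
        rw [← mul_sub, abs_mul, abs_of_nonneg (hp.1 a)]
        exact mul_le_mul_of_nonneg_left (h a) (hp.1 a)
    _ = c := by rw [← Finset.sum_mul, hp.2, one_mul]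

theorem isPMF_prod {ι : Type*} [Fintype ι] {P : ι → ℝ} (hP : IsPMF P) (N : ℕ) :
    IsPMF (fun v : Fin N → ι => ∏ j, P (v j)) := by
  classical
  refine ⟨fun v => Finset.prod_nonneg fun j _ => hP.1 _, ?_⟩
  have := Finset.prod_univ_sum (fun _ : Fin N => (Finset.univ : Finset ι)) (fun _ i => P i)
  rw [Fintype.piFinset_univ] at this
  rw [← this]
  simp [hP.2]

theorem supNorm_eq_norm {S A : Type*} [Fintype S] [Fintype A] [Nonempty S] [Nonempty A]
    (Q : S → A → ℝ) : supNorm Q = ‖Q‖ := by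
  unfold supNorm
  apply le_antisymm
  · refine Finset.sup'_le _ _ fun p _ => ?_
    exact (norm_le_pi_norm (Q p.1) p.2).trans (norm_le_pi_norm Q p.1)
  · have h : ∀ s a, |Q s a| ≤ Finset.univ.sup' Finset.univ_nonempty
        (fun p : S × A => |Q p.1 p.2|) := fun s a =>
      Finset.le_sup' (fun p : S × A => |Q p.1 p.2|) (Finset.mem_univ (s, a))
    exact (pi_norm_le_iff_of_nonempty _).2 fun s => (pi_norm_le_iff_of_nonempty _).2 fun a => h s a

theorem pessBellman_norm_le {S A ι : Type*} [Fintype S] [Fintype A] [Fintype ι]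
    [Nonempty S] [Nonempty A]
    (r : S → A → ℝ) (γ : ℝ) (hγ0 : 0 ≤ γ)
    (π : S → A → ℝ) (hπ : ∀ s, IsPMF (π s))
    (P : ι → ℝ) (hP : IsPMF P)
    (M : ι → S → A → S → ℝ) (hM : ∀ v s a, IsPMF (M v s a))
    (N : ℕ) (k : Fin N) (Q1 Q2 : S → A → ℝ) :
    ‖pessBellman r γ P M π N k Q1 - pessBellman r γ P M π N k Q2‖ ≤ γ * ‖Q1 - Q2‖ := by
  refine (pi_norm_le_iff_of_nonempty _).2 fun s => (pi_norm_le_iff_of_nonempty _).2 fun a => ?_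
  simp only [Pi.sub_apply, pessBellman, Real.norm_eq_abs]
  rw [add_sub_add_left_eq_sub, ← mul_sub, abs_mul, abs_of_nonneg hγ0]
  refine mul_le_mul_of_nonneg_left ?_ hγ0
  refine (isPMF_prod hP N).abs_sum_sub_le _ _ _ fun v => ?_
  have key : ∀ j, |(∑ s', M (v j) s a s' * ∑ a', π s' a' * Q1 s' a')
      - ∑ s', M (v j) s a s' * ∑ a', π s' a' * Q2 s' a'| ≤ ‖Q1 - Q2‖ := fun j =>
    (hM (v j) s a).abs_sum_sub_le _ _ _ fun s' => (hπ s').abs_sum_sub_le _ _ _ fun a' =>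
      (norm_le_pi_norm ((Q1 - Q2) s') a').trans (norm_le_pi_norm (Q1 - Q2) s')
  rw [abs_le]
  constructor
  · have := kmin_le_add (fun j => ∑ s', M (v j) s a s' * ∑ a', π s' a' * Q2 s' a')
      (fun j => ∑ s', M (v j) s a s' * ∑ a', π s' a' * Q1 s' a') ‖Q1 - Q2‖
      (fun j => by linarith [(abs_le.1 (key j)).1]) k
    linarith
  · have := kmin_le_add (fun j => ∑ s', M (v j) s a s' * ∑ a', π s' a' * Q1 s' a')
      (fun j => ∑ s', M (v j) s a s' * ∑ a', π s' a' * Q2 s' a') ‖Q1 - Q2‖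
      (fun j => by linarith [(abs_le.1 (key j)).2]) k
    linarith

/-- Theorem 1 (Policy Evaluation): the `(N,k)`-pessimistic Bellman operator is a
`γ`-contraction for the sup norm; consequently it has a unique fixed point, and from any
starting point the iterates converge to the fixed point in sup norm. -/
theorem pessBellman_contraction {S A ι : Type*} [Fintype S] [Fintype A] [Fintype ι]
    [Nonempty S] [Nonempty A] [Nonempty ι]
    (r : S → A → ℝ) (γ : ℝ) (hγ0 : 0 ≤ γ) (hγ1 : γ < 1)
    (π : S → A → ℝ) (hπ : ∀ s, IsPMF (π s))
    (P : ι → ℝ) (hP : IsPMF P)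
    (M : ι → S → A → S → ℝ) (hM : ∀ v s a, IsPMF (M v s a))
    (N : ℕ) (hN : 1 ≤ N) (k : ℕ) (hk1 : 1 ≤ k) (hkN : k ≤ N) :
    (∀ Q1 Q2 : S → A → ℝ,
      supNorm (fun s a => pessBellman r γ P M π N ⟨k - 1, by omega⟩ Q1 s a
          - pessBellman r γ P M π N ⟨k - 1, by omega⟩ Q2 s a)
        ≤ γ * supNorm (fun s a => Q1 s a - Q2 s a)) ∧
    (∃! Qfix : S → A → ℝ, pessBellman r γ P M π N ⟨k - 1, by omega⟩ Qfix = Qfix) ∧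
    (∀ Qfix : S → A → ℝ, pessBellman r γ P M π N ⟨k - 1, by omega⟩ Qfix = Qfix →
      ∀ Q : S → A → ℝ,
        Filter.Tendsto
          (fun n => supNorm
            (fun s a => (pessBellman r γ P M π N ⟨k - 1, by omega⟩)^[n] Q s a - Qfix s a))
          Filter.atTop (nhds 0)) := by
  have hB := pessBellman_norm_le r γ hγ0 π hπ P hP M hM N ⟨k - 1, by omega⟩
  generalize pessBellman r γ P M π N ⟨k - 1, by omega⟩ = B at hB ⊢
  have hC : ContractingWith ⟨γ, hγ0⟩ B := by
    refine ⟨by exact_mod_cast hγ1, LipschitzWith.of_dist_le_mul fun x y => ?_⟩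
    rw [dist_eq_norm, dist_eq_norm]
    exact hB x y
  refine ⟨fun Q1 Q2 => ?_, ⟨hC.fixedPoint, hC.fixedPoint_isFixedPt, fun y hy =>
    hC.fixedPoint_unique hy⟩, fun Qfix hfix Q => ?_⟩
  · rw [supNorm_eq_norm, supNorm_eq_norm]
    exact hB Q1 Q2
  · have h1 := hC.tendsto_iterate_fixedPoint Q
    rw [← hC.fixedPoint_unique hfix, tendsto_iff_norm_sub_tendsto_zero] at h1
    simp only [supNorm_eq_norm]
    exact h1
end

section
/- (Theorem 3, first bullet) For any fixed integer k ≥ 1 and any N ≥ k, the fixed points satisfy Q^π_{N+1,k}(s,a) ≤ Q^π_{N,k}(s,a) for all (s,a); that is, for fixed k the fixed point Q^π_{N,k} element-wise decreases with N. -/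
theorem kmin_le_kmin_add {N M : ℕ} (x : Fin N → ℝ) (y : Fin M → ℝ) (e : Fin N → Fin M)
    (he : Function.Injective e) (c : ℝ) (h : ∀ j, y (e j) ≤ x j + c)
    (k : ℕ) (hk : k < N) (hk' : k < M) :
    kmin y ⟨k, hk'⟩ ≤ kmin x ⟨k, hk⟩ + c := by
  by_contra! hlt
  unfold kmin at hlt
  have hx := Tuple.monotone_sort x
  have hy := Tuple.monotone_sort y
  have hcard : (Finset.Iic (⟨k, hk⟩ : Fin N)).card ≤ (Finset.Iio (⟨k, hk'⟩ : Fin M)).card := by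
    apply Finset.card_le_card_of_injOn (fun i => (Tuple.sort y).symm (e (Tuple.sort x i)))
    · intro i hi
      have hi' : i ≤ ⟨k, hk⟩ := by simpa using hi
      have h1 : x (Tuple.sort x i) ≤ x (Tuple.sort x ⟨k, hk⟩) := hx hi'
      have h2 := h (Tuple.sort x i)
      simp only [Finset.coe_Iio, Set.mem_Iio]
      by_contra! hge
      have h3 := hy hge
      simp only [Function.comp, Equiv.apply_symm_apply] at h3
      linarith
    · intro a _ b _ hab
      exact (Tuple.sort x).injective (he ((Tuple.sort y).symm.injective hab))
  simp at hcard

theorem isPMF_avg_le {α : Type*} [Fintype α] (p f g : α → ℝ) (hp : IsPMF p) (c : ℝ)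
    (h : ∀ a, f a ≤ g a + c) : ∑ a, p a * f a ≤ ∑ a, p a * g a + c := by
  calc ∑ a, p a * f a ≤ ∑ a, p a * (g a + c) :=
        Finset.sum_le_sum fun a _ => mul_le_mul_of_nonneg_left (h a) (hp.1 a)
    _ = ∑ a, p a * g a + c := by
        simp only [mul_add, Finset.sum_add_distrib, ← Finset.sum_mul, hp.2, one_mul]

theorem isPMF_pi {ι : Type*} [Fintype ι] (P : ι → ℝ) (hP : IsPMF P) (N : ℕ) :
    IsPMF (fun v : Fin N → ι => ∏ j, P (v j)) := by
  refine ⟨fun v => Finset.prod_nonneg fun j _ => hP.1 _, ?_⟩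
  rw [← Fintype.sum_pow, hP.2, one_pow]

theorem kmin_avg_le {ι : Type*} [Fintype ι] (P : ι → ℝ) (hP : IsPMF P) (f g : ι → ℝ) (c : ℝ)
    (h : ∀ i, f i ≤ g i + c) (N k : ℕ) (hk : k < N) (hk' : k < N + 1) :
    ∑ v : Fin (N + 1) → ι, (∏ j, P (v j)) * kmin (fun j => f (v j)) ⟨k, hk'⟩ ≤
      ∑ v : Fin N → ι, (∏ j, P (v j)) * kmin (fun j => g (v j)) ⟨k, hk⟩ + c := by
  rw [← (Fin.consEquiv (fun _ => ι)).sum_comp, Fintype.sum_prod_type]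
  simp only [Fin.consEquiv_apply, Fin.prod_univ_succ, Fin.cons_zero, Fin.cons_succ, mul_assoc,
    ← Finset.mul_sum]
  have key : ∀ i : ι, ∑ v : Fin N → ι, (∏ j, P (v j)) *
      kmin (fun j => f ((Fin.cons i v : Fin (N + 1) → ι) j)) ⟨k, hk'⟩ ≤
      ∑ v : Fin N → ι, (∏ j, P (v j)) * kmin (fun j => g (v j)) ⟨k, hk⟩ + c := by
    intro i
    apply isPMF_avg_le _ _ _ (isPMF_pi P hP N)
    intro v
    apply kmin_le_kmin_add _ _ Fin.succ (Fin.succ_injective N)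
    intro j
    simpa using h (v j)
  have := isPMF_avg_le P _ (fun _ => 0) hP _ (fun i => (key i).trans_eq (zero_add _).symm)
  simpa using this

/-- Theorem 3, first bullet: for fixed `k ≥ 1` and `N ≥ k`, the fixed points of the
`(N,k)`- and `(N+1,k)`-pessimistic Bellman operators satisfy
`Q^π_{N+1,k}(s,a) ≤ Q^π_{N,k}(s,a)` for all `(s,a)`. -/
theorem pessBellman_fixedPoint_anti_N {S A ι : Type*} [Fintype S] [Fintype A] [Fintype ι]
    (r : S → A → ℝ) (γ : ℝ) (hγ0 : 0 ≤ γ) (hγ1 : γ < 1)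
    (π : S → A → ℝ) (hπ : ∀ s, IsPMF (π s))
    (P : ι → ℝ) (hP : IsPMF P)
    (M : ι → S → A → S → ℝ) (hM : ∀ v s a, IsPMF (M v s a))
    (N k : ℕ) (hk1 : 1 ≤ k) (hkN : k ≤ N)
    (Q1 Q2 : S → A → ℝ)
    (hQ1 : pessBellman r γ P M π N ⟨k - 1, by omega⟩ Q1 = Q1)
    (hQ2 : pessBellman r γ P M π (N + 1) ⟨k - 1, by omega⟩ Q2 = Q2) :
    ∀ s a, Q2 s a ≤ Q1 s a := by
  intro s a
  obtain ⟨p, -, hp⟩ := Finset.exists_max_image (Finset.univ : Finset (S × A))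
    (fun p => Q2 p.1 p.2 - Q1 p.1 p.2) ⟨(s, a), Finset.mem_univ _⟩
  set c := Q2 p.1 p.2 - Q1 p.1 p.2 with hc
  have hle : ∀ s a, Q2 s a ≤ Q1 s a + c := fun s a => by
    have := hp (s, a) (Finset.mem_univ _)
    simp only at this
    linarith
  have h1 := congrFun (congrFun hQ1 p.1) p.2
  have h2 := congrFun (congrFun hQ2 p.1) p.2
  have hk := kmin_avg_le P hP
    (fun i => ∑ s', M i p.1 p.2 s' * ∑ a', π s' a' * Q2 s' a')
    (fun i => ∑ s', M i p.1 p.2 s' * ∑ a', π s' a' * Q1 s' a') c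
    (fun i => isPMF_avg_le _ _ _ (hM i p.1 p.2) c
      (fun s' => isPMF_avg_le _ _ _ (hπ s') c (hle s'))) N (k - 1) (by omega) (by omega)
  have hk2 := mul_le_mul_of_nonneg_left hk hγ0
  unfold pessBellman at h1 h2
  have hcγ : c ≤ γ * c := by
    rw [mul_add] at hk2
    linarith
  have hc0 : c ≤ 0 := by nlinarith
  linarith [hle s a]
end

section
/- (Theorem 3, third bullet) For any integer N ≥ 1, the fixed points satisfy Q^π_{N,N}(s,a) ≤ Q^π_{N+1,N+1}(s,a) for all (s,a); that is, Q^π_{N,N} element-wise increases with N. -/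
theorem kmin_last_ge {n N : ℕ} (x : Fin N → ℝ) (hn : n < N) (h : n + 1 = N) (j : Fin N) :
    x j ≤ kmin x ⟨n, hn⟩ := by
  have hm := Tuple.monotone_sort x
  have hle : (Tuple.sort x).symm j ≤ ⟨n, hn⟩ := by
    rw [Fin.le_def]
    have := ((Tuple.sort x).symm j).isLt
    simp only
    omega
  have := hm hle
  simpa [kmin] using this

theorem sum_prod_eq_one {ι : Type*} [Fintype ι] (P : ι → ℝ) (hP : ∑ i, P i = 1) (N : ℕ) :
    ∑ v : Fin N → ι, ∏ j, P (v j) = 1 := by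
  classical
  have := Finset.prod_univ_sum (fun _ : Fin N => (Finset.univ : Finset ι)) (fun _ i => P i)
  rw [Fintype.piFinset_univ] at this
  rw [← this]
  simp [hP]

theorem sum_succ_split {ι : Type*} [Fintype ι] (N : ℕ) (f : (Fin (N + 1) → ι) → ℝ) :
    ∑ w : Fin (N + 1) → ι, f w = ∑ i : ι, ∑ v : Fin N → ι, f (Fin.cons i v) := by
  rw [← Fintype.sum_prod_type' (fun (i : ι) (v : Fin N → ι) => f (Fin.cons i v))]
  rw [← (Fin.consEquiv (fun _ : Fin (N + 1) => ι)).sum_comp]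
  rfl

theorem avg_le_add {α : Type*} [Fintype α] (p : α → ℝ) (hp : IsPMF p) (f g : α → ℝ) (D : ℝ)
    (h : ∀ a, f a ≤ g a + D) : ∑ a, p a * f a ≤ ∑ a, p a * g a + D := by
  calc ∑ a, p a * f a ≤ ∑ a, p a * (g a + D) :=
        Finset.sum_le_sum fun a _ => mul_le_mul_of_nonneg_left (h a) (hp.1 a)
    _ = ∑ a, p a * g a + D := by
        simp only [mul_add, Finset.sum_add_distrib, ← Finset.sum_mul, hp.2, one_mul]

theorem step_le {ι : Type*} [Fintype ι] (P : ι → ℝ) (hP : IsPMF P) (x y : ι → ℝ) (D : ℝ)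
    (hxy : ∀ i, x i ≤ y i + D) (N : ℕ) (hN : 1 ≤ N) (h1 : N - 1 < N) (h2 : N + 1 - 1 < N + 1) :
    ∑ v : Fin N → ι, (∏ j, P (v j)) * kmin (fun j => x (v j)) ⟨N - 1, h1⟩ ≤
    ∑ w : Fin (N + 1) → ι, (∏ j, P (w j)) * kmin (fun j => y (w j)) ⟨N + 1 - 1, h2⟩ + D := by
  have key : ∀ (i : ι) (v : Fin N → ι), kmin (fun j => x (v j)) ⟨N - 1, h1⟩ ≤
      kmin (fun j => y ((Fin.cons i v : Fin (N + 1) → ι) j)) ⟨N + 1 - 1, h2⟩ + D := by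
    intro i v
    set j := Tuple.sort (fun j => x (v j)) ⟨N - 1, h1⟩ with hj
    have e : kmin (fun j => x (v j)) ⟨N - 1, h1⟩ = x (v j) := rfl
    have := kmin_last_ge (fun j => y ((Fin.cons i v : Fin (N + 1) → ι) j)) h2 (by omega) j.succ
    simp only [Fin.cons_succ] at this
    rw [e]
    linarith [hxy (v j)]
  have hprod : IsPMF (fun v : Fin N → ι => ∏ j, P (v j)) :=
    ⟨fun v => Finset.prod_nonneg fun j _ => hP.1 _, sum_prod_eq_one P hP.2 N⟩
  rw [sum_succ_split]
  have hi : ∀ i, ∑ v : Fin N → ι, (∏ j, P (v j)) * kmin (fun j => x (v j)) ⟨N - 1, h1⟩ ≤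
      ∑ v : Fin N → ι, (∏ j, P (v j)) *
        kmin (fun j => y ((Fin.cons i v : Fin (N + 1) → ι) j)) ⟨N + 1 - 1, h2⟩ + D :=
    fun i => avg_le_add _ hprod _ _ D (key i)
  have := avg_le_add P hP _ _ D hi
  rw [← Finset.sum_mul, hP.2, one_mul] at this
  refine this.trans (le_of_eq ?_)
  congr 1
  refine Finset.sum_congr rfl fun i _ => ?_
  rw [Finset.mul_sum]
  refine Finset.sum_congr rfl fun v _ => ?_
  rw [Fin.prod_univ_succ (fun j => P ((Fin.cons i v : Fin (N + 1) → ι) j))]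
  simp only [Fin.cons_zero, Fin.cons_succ, mul_assoc]

/-- Theorem 3, third bullet: the fixed points of the `(N,N)`- and
`(N+1,N+1)`-pessimistic Bellman operators satisfy
`Q^π_{N,N}(s,a) ≤ Q^π_{N+1,N+1}(s,a)` for all `(s,a)`. -/
theorem pessBellman_fixedPoint_mono_NN {S A ι : Type*} [Fintype S] [Fintype A] [Fintype ι]
    (r : S → A → ℝ) (γ : ℝ) (hγ0 : 0 ≤ γ) (hγ1 : γ < 1)
    (π : S → A → ℝ) (hπ : ∀ s, IsPMF (π s))
    (P : ι → ℝ) (hP : IsPMF P)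
    (M : ι → S → A → S → ℝ) (hM : ∀ v s a, IsPMF (M v s a))
    (N : ℕ) (hN : 1 ≤ N)
    (Q1 Q2 : S → A → ℝ)
    (hQ1 : pessBellman r γ P M π N ⟨N - 1, by omega⟩ Q1 = Q1)
    (hQ2 : pessBellman r γ P M π (N + 1) ⟨N + 1 - 1, by omega⟩ Q2 = Q2) :
    ∀ s a, Q1 s a ≤ Q2 s a := by
  intro s a
  obtain ⟨⟨s0, a0⟩, -, hmax⟩ := Finset.exists_max_image (Finset.univ : Finset (S × A))
    (fun p => Q1 p.1 p.2 - Q2 p.1 p.2) ⟨(s, a), Finset.mem_univ _⟩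
  set D := Q1 s0 a0 - Q2 s0 a0 with hD
  have hle : ∀ s a, Q1 s a ≤ Q2 s a + D := fun s a => by
    have := hmax (s, a) (Finset.mem_univ _)
    simp only at this
    linarith
  have hx := step_le P hP
    (fun i => ∑ s', M i s0 a0 s' * ∑ a', π s' a' * Q1 s' a')
    (fun i => ∑ s', M i s0 a0 s' * ∑ a', π s' a' * Q2 s' a') D
    (fun i => avg_le_add _ (hM i s0 a0) _ _ D fun s' => avg_le_add _ (hπ s') _ _ D (hle s'))
    N hN (by omega) (by omega)
  have e1 := congrFun (congrFun hQ1 s0) a0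
  have e2 := congrFun (congrFun hQ2 s0) a0
  simp only [pessBellman] at e1 e2
  have h3 := mul_le_mul_of_nonneg_left hx hγ0
  rw [mul_add] at h3
  have h4 : D ≤ γ * D := by linarith
  have h5 : D ≤ 0 := by nlinarith
  linarith [hle s a]
end

section
/- (Theorem 5, monotone improvement part) Let ρ0 be a probability mass function on S and α > 0. Define J(π) := Σ_s ρ0(s) · Σ_a π(a|s) · Q^π_{N,k}(s,a) and, for a reference policy μ with μ(a|s) > 0 for all s, a, define J̄(π;μ) := Σ_s ρ0(s) · ( Σ_a π(a|s) · Q̄^π_{N,k;μ}(s,a) − α·KL(π(·|s)‖μ(·|s)) ). Then J̄(π;π) = J(π) for every everywhere-positive policy π, and for any everywhere-positive policy π1 and any policy π2, if J̄(π2;π1) ≥ J̄(π1;π1) then J(π2) ≥ J(π1). -/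
/-- Kullback–Leibler divergence `KL(p‖q) = Σ_a p(a)·log(p(a)/q(a))` on a finite type
(with the convention `0·log 0 = 0`, automatic here). -/
noncomputable def KLdiv {α : Type*} [Fintype α] (p q : α → ℝ) : ℝ :=
  ∑ a, p a * Real.log (p a / q a)

/-- The soft `(N,k)`-pessimistic Bellman operator with reference policy `μ` and
coefficient `α` (with `k` given 0-indexed as `k : Fin N`):
`(B̄*_{N,k;μ} Q)(s,a) = r(s,a) + γ · Σ_{v} (Π_j P(v_j)) ·
  kmin_k( j ↦ Σ_{s'} M(v_j)(s,a)(s') · α·log Σ_{a'} μ(a'|s')·exp(Q(s',a')/α) )`. -/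
noncomputable def softBellman {S A ι : Type*} [Fintype S] [Fintype A] [Fintype ι]
    (r : S → A → ℝ) (γ : ℝ) (P : ι → ℝ) (M : ι → S → A → S → ℝ)
    (μ : S → A → ℝ) (α : ℝ) (N : ℕ) (k : Fin N) (Q : S → A → ℝ) : S → A → ℝ :=
  fun s a => r s a + γ * ∑ v : Fin N → ι, (∏ j, P (v j)) *
    kmin (fun j => ∑ s', M (v j) s a s' *
      (α * Real.log (∑ a', μ s' a' * Real.exp (Q s' a' / α)))) k

/-- The regularized `(N,k)`-pessimistic evaluation operator for policy `π`, reference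
policy `μ` and coefficient `α` (with `k` given 0-indexed as `k : Fin N`):
`(B̄^π_{N,k;μ} Q)(s,a) = r(s,a) + γ · Σ_{v} (Π_j P(v_j)) ·
  kmin_k( j ↦ Σ_{s'} M(v_j)(s,a)(s') · (Σ_{a'} π(a'|s')·Q(s',a') − α·KL(π(·|s')‖μ(·|s'))) )`. -/
noncomputable def regBellman {S A ι : Type*} [Fintype S] [Fintype A] [Fintype ι]
    (r : S → A → ℝ) (γ : ℝ) (P : ι → ℝ) (M : ι → S → A → S → ℝ)
    (π μ : S → A → ℝ) (α : ℝ) (N : ℕ) (k : Fin N) (Q : S → A → ℝ) : S → A → ℝ :=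
  fun s a => r s a + γ * ∑ v : Fin N → ι, (∏ j, P (v j)) *
    kmin (fun j => ∑ s', M (v j) s a s' *
      ((∑ a', π s' a' * Q s' a') - α * KLdiv (π s') (μ s'))) k

theorem KLdiv_nonneg_of {A : Type*} [Fintype A] (p q : A → ℝ) (hp : IsPMF p) (hq : IsPMF q)
    (hpos : ∀ a, 0 < q a) : 0 ≤ KLdiv p q := by
  have h : ∑ a, (p a - q a) ≤ KLdiv p q := by
    unfold KLdiv
    refine Finset.sum_le_sum fun a _ => ?_
    rcases (hp.1 a).eq_or_lt with h0 | h0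
    · rw [← h0]
      have := hpos a
      simp only [zero_mul]
      linarith
    · have h1 := Real.one_sub_inv_le_log_of_pos (div_pos h0 (hpos a))
      have h2 := mul_le_mul_of_nonneg_left h1 h0.le
      have h3 : p a * (1 - (p a / q a)⁻¹) = p a - q a := by
        field_simp
      linarith
  rw [Finset.sum_sub_distrib, hp.2, hq.2] at h
  linarith

theorem KLdiv_self_of {A : Type*} [Fintype A] (p : A → ℝ) (hpos : ∀ a, 0 < p a) :
    KLdiv p p = 0 := by
  unfold KLdiv
  refine Finset.sum_eq_zero fun a _ => ?_
  rw [div_self (hpos a).ne', Real.log_one, mul_zero]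

theorem fixed_compare {S A ι : Type*} [Fintype S] [Fintype A] [Fintype ι]
    (r : S → A → ℝ) (γ : ℝ) (hγ0 : 0 ≤ γ) (hγ1 : γ < 1)
    (P : ι → ℝ) (hP : IsPMF P)
    (M : ι → S → A → S → ℝ) (hM : ∀ v s a, IsPMF (M v s a))
    (N : ℕ) (k : Fin N) (Q Q' : S → A → ℝ) (V V' : S → ℝ)
    (hQ : ∀ s a, Q s a = r s a + γ * ∑ v : Fin N → ι, (∏ j, P (v j)) *
      kmin (fun j => ∑ s', M (v j) s a s' * V s') k)
    (hQ' : ∀ s a, Q' s a = r s a + γ * ∑ v : Fin N → ι, (∏ j, P (v j)) *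
      kmin (fun j => ∑ s', M (v j) s a s' * V' s') k)
    (hV : ∀ c : ℝ, (∀ s a, Q' s a ≤ Q s a + c) → ∀ s, V' s ≤ V s + c) :
    ∀ s a, Q' s a ≤ Q s a := by
  intro s0 a0
  obtain ⟨m, -, hm⟩ := Finset.exists_max_image (Finset.univ : Finset (S × A))
    (fun p => Q' p.1 p.2 - Q p.1 p.2) ⟨(s0, a0), Finset.mem_univ _⟩
  set c := Q' m.1 m.2 - Q m.1 m.2 with hc
  have hb : ∀ s a, Q' s a ≤ Q s a + c := by
    intro s a
    have := hm (s, a) (Finset.mem_univ _)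
    simp only at this
    linarith
  have hVc := hV c hb
  have hprod : ∑ v : Fin N → ι, ∏ j, P (v j) = 1 := by
    have := Finset.prod_univ_sum (fun _ : Fin N => (Finset.univ : Finset ι)) (fun _ i => P i)
    rw [Fintype.piFinset_univ] at this
    rw [← this]
    simp [hP.2]
  have hstep : ∀ s a, Q' s a ≤ Q s a + γ * c := by
    intro s a
    rw [hQ s a, hQ' s a]
    have key : ∑ v : Fin N → ι, (∏ j, P (v j)) *
          kmin (fun j => ∑ s', M (v j) s a s' * V' s') k ≤
        ∑ v : Fin N → ι, (∏ j, P (v j)) *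
          (kmin (fun j => ∑ s', M (v j) s a s' * V s') k + c) := by
      refine Finset.sum_le_sum fun v _ => ?_
      refine mul_le_mul_of_nonneg_left ?_ (Finset.prod_nonneg fun j _ => hP.1 _)
      refine kmin_le_add _ _ c (fun j => ?_) k
      calc ∑ s', M (v j) s a s' * V' s'
          ≤ ∑ s', M (v j) s a s' * (V s' + c) :=
            Finset.sum_le_sum fun s' _ =>
              mul_le_mul_of_nonneg_left (hVc s') ((hM (v j) s a).1 s')
        _ = ∑ s', M (v j) s a s' * V s' + c := by
            simp only [mul_add, Finset.sum_add_distrib, ← Finset.sum_mul, (hM (v j) s a).2,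
              one_mul]
    simp only [mul_add, Finset.sum_add_distrib] at key
    rw [← Finset.sum_mul, hprod, one_mul] at key
    have := mul_le_mul_of_nonneg_left key hγ0
    linarith
  have h1 := hstep m.1 m.2
  have h2 : c ≤ 0 := by nlinarith
  linarith [hb s0 a0]

theorem policy_avg_le {A : Type*} [Fintype A] (p : A → ℝ) (hp : IsPMF p) (f g : A → ℝ) (c : ℝ)
    (h : ∀ a, f a ≤ g a + c) : ∑ a, p a * f a ≤ ∑ a, p a * g a + c := by
  calc ∑ a, p a * f a ≤ ∑ a, p a * (g a + c) :=
        Finset.sum_le_sum fun a _ => mul_le_mul_of_nonneg_left (h a) (hp.1 a)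
    _ = _ := by simp only [mul_add, Finset.sum_add_distrib, ← Finset.sum_mul, hp.2, one_mul]

theorem reg_self_value {S A ι : Type*} [Fintype S] [Fintype A] [Fintype ι]
    (r : S → A → ℝ) (γ : ℝ) (hγ0 : 0 ≤ γ) (hγ1 : γ < 1)
    (P : ι → ℝ) (hP : IsPMF P)
    (M : ι → S → A → S → ℝ) (hM : ∀ v s a, IsPMF (M v s a))
    (N : ℕ) (k : Fin N) (ρ0 : S → ℝ) (α : ℝ)
    (π : S → A → ℝ) (hπ : ∀ s, IsPMF (π s)) (hpos : ∀ s a, 0 < π s a)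
    (Qb Q : S → A → ℝ) (hQb : regBellman r γ P M π π α N k Qb = Qb)
    (hQ : pessBellman r γ P M π N k Q = Q) :
    ∑ s, ρ0 s * ((∑ a, π s a * Qb s a) - α * KLdiv (π s) (π s))
      = ∑ s, ρ0 s * ∑ a, π s a * Q s a := by
  have hkl : ∀ s, KLdiv (π s) (π s) = 0 := fun s => KLdiv_self_of _ (hpos s)
  have e1 := fun s a => (congrFun (congrFun hQb s) a).symm
  have e2 := fun s a => (congrFun (congrFun hQ s) a).symm
  simp only [regBellman, hkl, mul_zero, sub_zero] at e1
  simp only [pessBellman] at e2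
  have l1 := fixed_compare r γ hγ0 hγ1 P hP M hM N k Qb Q _ _ e1 e2
    (fun c h s => policy_avg_le _ (hπ s) _ _ c (h s))
  have l2 := fixed_compare r γ hγ0 hγ1 P hP M hM N k Q Qb _ _ e2 e1
    (fun c h s => policy_avg_le _ (hπ s) _ _ c (h s))
  have : Qb = Q := by
    funext s a
    exact le_antisymm (l2 s a) (l1 s a)
  simp only [hkl, mul_zero, sub_zero, this]

/-- Theorem 5, monotone improvement part.  With
`J(π) = Σ_s ρ0(s)·Σ_a π(a|s)·Q^π_{N,k}(s,a)` and
`J̄(π;μ) = Σ_s ρ0(s)·(Σ_a π(a|s)·Q̄^π_{N,k;μ}(s,a) − α·KL(π(·|s)‖μ(·|s)))`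
(expressed via the respective fixed points), we have `J̄(π;π) = J(π)` for every
everywhere-positive policy `π`, and for any everywhere-positive policy `π1` and any
policy `π2`, `J̄(π2;π1) ≥ J̄(π1;π1)` implies `J(π2) ≥ J(π1)`. -/
theorem monotone_policy_improvement {S A ι : Type*} [Fintype S] [Fintype A] [Fintype ι]
    (r : S → A → ℝ) (γ : ℝ) (hγ0 : 0 ≤ γ) (hγ1 : γ < 1)
    (P : ι → ℝ) (hP : IsPMF P)
    (M : ι → S → A → S → ℝ) (hM : ∀ v s a, IsPMF (M v s a))
    (N : ℕ) (hN : 1 ≤ N) (k : ℕ) (hk1 : 1 ≤ k) (hkN : k ≤ N)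
    (ρ0 : S → ℝ) (hρ0 : IsPMF ρ0) (α : ℝ) (hα : 0 < α) :
    -- `J̄(π;π) = J(π)` for every everywhere-positive policy `π`
    (∀ π : S → A → ℝ, (∀ s, IsPMF (π s)) → (∀ s a, 0 < π s a) →
      ∀ Qb Q : S → A → ℝ,
        regBellman r γ P M π π α N ⟨k - 1, by omega⟩ Qb = Qb →
        pessBellman r γ P M π N ⟨k - 1, by omega⟩ Q = Q →
        ∑ s, ρ0 s * ((∑ a, π s a * Qb s a) - α * KLdiv (π s) (π s))
          = ∑ s, ρ0 s * ∑ a, π s a * Q s a) ∧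
    -- `J̄(π2;π1) ≥ J̄(π1;π1)` implies `J(π2) ≥ J(π1)`
    (∀ π1 : S → A → ℝ, (∀ s, IsPMF (π1 s)) → (∀ s a, 0 < π1 s a) →
     ∀ π2 : S → A → ℝ, (∀ s, IsPMF (π2 s)) →
      ∀ Qb1 Qb2 Q1 Q2 : S → A → ℝ,
        regBellman r γ P M π1 π1 α N ⟨k - 1, by omega⟩ Qb1 = Qb1 →
        regBellman r γ P M π2 π1 α N ⟨k - 1, by omega⟩ Qb2 = Qb2 →
        pessBellman r γ P M π1 N ⟨k - 1, by omega⟩ Q1 = Q1 →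
        pessBellman r γ P M π2 N ⟨k - 1, by omega⟩ Q2 = Q2 →
        (∑ s, ρ0 s * ((∑ a, π1 s a * Qb1 s a) - α * KLdiv (π1 s) (π1 s))
          ≤ ∑ s, ρ0 s * ((∑ a, π2 s a * Qb2 s a) - α * KLdiv (π2 s) (π1 s))) →
        ∑ s, ρ0 s * ∑ a, π1 s a * Q1 s a ≤ ∑ s, ρ0 s * ∑ a, π2 s a * Q2 s a) := by
  refine ⟨fun π hπ hpos Qb Q hQb hQ =>
    reg_self_value r γ hγ0 hγ1 P hP M hM N _ ρ0 α π hπ hpos Qb Q hQb hQ, ?_⟩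
  intro π1 hπ1 hpos π2 hπ2 Qb1 Qb2 Q1 Q2 hQb1 hQb2 hQ1 hQ2 hle
  rw [reg_self_value r γ hγ0 hγ1 P hP M hM N _ ρ0 α π1 hπ1 hpos Qb1 Q1 hQb1 hQ1] at hle
  refine hle.trans ?_
  have hkl : ∀ s, 0 ≤ α * KLdiv (π2 s) (π1 s) := fun s =>
    mul_nonneg hα.le (KLdiv_nonneg_of _ _ (hπ2 s) (hπ1 s) (hpos s))
  have e1 := fun s a => (congrFun (congrFun hQb2 s) a).symm
  have e2 := fun s a => (congrFun (congrFun hQ2 s) a).symm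
  simp only [regBellman] at e1
  simp only [pessBellman] at e2
  have l := fixed_compare r γ hγ0 hγ1 P hP M hM N _ Q2 Qb2
    (fun s => ∑ a, π2 s a * Q2 s a)
    (fun s => (∑ a, π2 s a * Qb2 s a) - α * KLdiv (π2 s) (π1 s)) e2 e1
    (fun c h s => by
      have h1 := policy_avg_le _ (hπ2 s) _ _ c (h s)
      have h2 := hkl s
      linarith)
  refine Finset.sum_le_sum fun s _ => mul_le_mul_of_nonneg_left ?_ (hρ0.1 s)
  have h1 := policy_avg_le _ (hπ2 s) (Qb2 s) (Q2 s) 0 (fun a => by linarith [l s a])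
  linarith [hkl s]
end

section
/- (Theorem 5, iterative regularized policy optimization part) Fix α > 0 and let π_0 be a policy with π_0(a|s) > 0 for all s, a. Define the iteration: π_{i+1}(a|s) = π_i(a|s)·exp(Q̄*_i(s,a)/α) / (Σ_b π_i(b|s)·exp(Q̄*_i(s,b)/α)), where Q̄*_i := Q̄*_{N,k;π_i} is the unique fixed point of the soft (N,k)-pessimistic Bellman operator with reference policy π_i. Then: (i) the sequence of unregularized fixed points is pointwise nondecreasing, Q^{π_{i+1}}_{N,k}(s,a) ≥ Q^{π_i}_{N,k}(s,a) for all (s,a), and converges pointwise as i → ∞; and (ii) for any s, a, a' with lim_{i→∞} Q^{π_i}_{N,k}(s,a) > lim_{i→∞} Q^{π_i}_{N,k}(s,a'), the ratio π_i(a|s)/π_i(a'|s) tends to infinity as i → ∞. -/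
theorem kmin_le_aux {N : ℕ} (x y : Fin N → ℝ) (k : Fin N) (c : ℝ)
    (h : ∀ j, x j ≤ y j + c) : kmin x k ≤ kmin y k + c := by
  classical
  have key : ∃ i j : Fin N, k ≤ i ∧ j ≤ k ∧ Tuple.sort x i = Tuple.sort y j := by
    by_contra hcon
    push Not at hcon
    have hd : Disjoint ((Finset.Ici k).image (Tuple.sort x)) ((Finset.Iic k).image (Tuple.sort y)) := by
      rw [Finset.disjoint_left]
      intro z hz hz'
      simp only [Finset.mem_image, Finset.mem_Ici, Finset.mem_Iic] at hz hz'
      obtain ⟨i, hi, rfl⟩ := hz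
      obtain ⟨j, hj, hji⟩ := hz'
      exact hcon i j hi hj hji.symm
    have h1 := Finset.card_union_of_disjoint hd
    have h2 := Finset.card_le_univ
      ((Finset.Ici k).image (Tuple.sort x) ∪ (Finset.Iic k).image (Tuple.sort y))
    rw [h1, Finset.card_image_of_injective _ (Tuple.sort x).injective,
      Finset.card_image_of_injective _ (Tuple.sort y).injective, Fin.card_Ici, Fin.card_Iic,
      Fintype.card_fin] at h2
    have := k.2
    omega
  obtain ⟨i, j, hi, hj, hij⟩ := key
  have h1 : x (Tuple.sort x k) ≤ x (Tuple.sort x i) := Tuple.monotone_sort x hi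
  have h2 : y (Tuple.sort y j) ≤ y (Tuple.sort y k) := Tuple.monotone_sort y hj
  have h3 := h (Tuple.sort x i)
  unfold kmin
  rw [hij] at h1 h3
  linarith

/-- Common shape of both Bellman operators. -/
noncomputable def auxT {S A ι : Type*} [Fintype S] [Fintype ι]
    (r : S → A → ℝ) (γ : ℝ) (P : ι → ℝ) (M : ι → S → A → S → ℝ)
    (N : ℕ) (k : Fin N) (V : S → ℝ) : S → A → ℝ :=
  fun s a => r s a + γ * ∑ v : Fin N → ι, (∏ j, P (v j)) *
    kmin (fun j => ∑ s', M (v j) s a s' * V s') k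

theorem auxT_le {S A ι : Type*} [Fintype S] [Fintype ι]
    (r : S → A → ℝ) (γ : ℝ) (hγ0 : 0 ≤ γ) (P : ι → ℝ) (hP : IsPMF P)
    (M : ι → S → A → S → ℝ) (hM : ∀ v s a, IsPMF (M v s a))
    (N : ℕ) (k : Fin N) (V W : S → ℝ) (c : ℝ) (h : ∀ s, V s ≤ W s + c) (s : S) (a : A) :
    auxT r γ P M N k V s a ≤ auxT r γ P M N k W s a + γ * c := by
  have hsum : ∑ v : Fin N → ι, (∏ j, P (v j)) = 1 := by
    have := Fintype.sum_pow P N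
    rw [hP.2, one_pow] at this
    exact this.symm
  have h1 : ∑ v : Fin N → ι, (∏ j, P (v j)) * kmin (fun j => ∑ s', M (v j) s a s' * V s') k
      ≤ ∑ v : Fin N → ι, (∏ j, P (v j)) *
        (kmin (fun j => ∑ s', M (v j) s a s' * W s') k + c) := by
    apply Finset.sum_le_sum
    intro v _
    apply mul_le_mul_of_nonneg_left _ (Finset.prod_nonneg fun j _ => hP.1 _)
    apply kmin_le_aux
    intro j
    calc ∑ s', M (v j) s a s' * V s' ≤ ∑ s', M (v j) s a s' * (W s' + c) :=
          Finset.sum_le_sum fun s' _ => mul_le_mul_of_nonneg_left (h s') ((hM _ _ _).1 _)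
      _ = _ := by simp only [mul_add, Finset.sum_add_distrib, ← Finset.sum_mul, (hM _ _ _).2, one_mul]
  simp only [mul_add, Finset.sum_add_distrib, ← Finset.sum_mul, hsum, one_mul] at h1
  have h2 := mul_le_mul_of_nonneg_left h1 hγ0
  unfold auxT
  linarith

theorem aux_compare {S A ι : Type*} [Fintype S] [Fintype A] [Fintype ι]
    (r : S → A → ℝ) (γ : ℝ) (hγ0 : 0 ≤ γ) (hγ1 : γ < 1) (P : ι → ℝ) (hP : IsPMF P)
    (M : ι → S → A → S → ℝ) (hM : ∀ v s a, IsPMF (M v s a))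
    (N : ℕ) (k : Fin N) (V W : S → ℝ) (Q Q' : S → A → ℝ)
    (hQ : auxT r γ P M N k V = Q) (hQ' : auxT r γ P M N k W = Q')
    (h : ∀ c, (∀ s a, Q s a ≤ Q' s a + c) → ∀ s, V s ≤ W s + c) (s : S) (a : A) :
    Q s a ≤ Q' s a := by
  haveI : Nonempty (S × A) := ⟨(s, a)⟩
  obtain ⟨p, hp⟩ := Finite.exists_max (fun p : S × A => Q p.1 p.2 - Q' p.1 p.2)
  have hc := h (Q p.1 p.2 - Q' p.1 p.2) (fun s a => by have := hp (s, a); simp only at this; linarith)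
  have h1 := auxT_le r γ hγ0 P hP M hM N k V W _ hc p.1 p.2
  rw [hQ, hQ'] at h1
  have h2 := hp (s, a)
  simp only at h2
  have h3 : Q p.1 p.2 - Q' p.1 p.2 ≤ 0 := by nlinarith
  linarith

theorem aux_jensen {A : Type*} [Fintype A] (p q : A → ℝ) (hp : IsPMF p) (hpos : ∀ a, 0 < p a)
    (α : ℝ) (hα : 0 < α) :
    0 < ∑ a, p a * Real.exp (q a / α) ∧
    ∑ a, p a * q a ≤ α * Real.log (∑ a, p a * Real.exp (q a / α)) ∧
    α * Real.log (∑ a, p a * Real.exp (q a / α)) ≤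
      ∑ a, (p a * Real.exp (q a / α) / ∑ b, p b * Real.exp (q b / α)) * q a := by
  have hne : (Finset.univ : Finset A).Nonempty := by
    by_contra hcon
    rw [Finset.not_nonempty_iff_eq_empty] at hcon
    have := hp.2
    simp [hcon] at this
  have hZ : 0 < ∑ a, p a * Real.exp (q a / α) :=
    Finset.sum_pos (fun a _ => mul_pos (hpos a) (Real.exp_pos _)) hne
  set Z := ∑ a, p a * Real.exp (q a / α) with hZdef
  have hexp : Real.exp (Real.log Z) = Z := Real.exp_log hZ
  refine ⟨hZ, ?_, ?_⟩
  · have h1 : ∀ a, p a * q a ≤ α * (p a * Real.log Z + p a * Real.exp (q a / α) / Z - p a) := by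
      intro a
      have := Real.add_one_le_exp (q a / α - Real.log Z)
      rw [Real.exp_sub, hexp] at this
      have h3 := mul_le_mul_of_nonneg_left this (mul_pos hα (hpos a)).le
      have h4 : α * (q a / α) = q a := by field_simp
      have h5 : p a * q a = p a * (α * (q a / α)) := by rw [h4]
      rw [h5, mul_div_assoc]
      linarith
    refine (Finset.sum_le_sum fun a _ => h1 a).trans (le_of_eq ?_)
    rw [← Finset.mul_sum, Finset.sum_sub_distrib, Finset.sum_add_distrib, ← Finset.sum_mul,
      ← Finset.sum_div, ← hZdef, hp.2, div_self hZ.ne']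
    ring
  · have hs : ∑ a, p a * Real.exp (q a / α) / Z = 1 := by
      rw [← Finset.sum_div, ← hZdef, div_self hZ.ne']
    have h1 : ∀ a, p a * Real.exp (q a / α) / Z * (α * Real.log Z) - α * (p a - p a * Real.exp (q a / α) / Z)
        ≤ p a * Real.exp (q a / α) / Z * q a := by
      intro a
      have := Real.add_one_le_exp (Real.log Z - q a / α)
      rw [Real.exp_sub, hexp] at this
      have hw : 0 < p a * Real.exp (q a / α) / Z := div_pos (mul_pos (hpos a) (Real.exp_pos _)) hZ
      have h3 := mul_le_mul_of_nonneg_left this (mul_pos hα hw).le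
      have h4 : α * (q a / α) = q a := by field_simp
      have h5 : p a * Real.exp (q a / α) / Z * (Z / Real.exp (q a / α)) = p a := by
        have := (Real.exp_pos (q a / α)).ne'
        field_simp
      generalize p a * Real.exp (q a / α) / Z = w at *
      have h6 : w * q a = w * (α * (q a / α)) := by rw [h4]
      have h7 : α * w * (Z / Real.exp (q a / α)) = α * p a := by rw [mul_assoc, h5]
      rw [h6]
      linarith
    refine le_trans (le_of_eq ?_) (Finset.sum_le_sum fun a _ => h1 a)
    rw [Finset.sum_sub_distrib, ← Finset.sum_mul, ← Finset.mul_sum, Finset.sum_sub_distrib, hs, hp.2]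
    ring

theorem aux_avg {A : Type*} [Fintype A] (p q q' : A → ℝ) (hp : IsPMF p) (c : ℝ)
    (h : ∀ a, q a ≤ q' a + c) : ∑ a, p a * q a ≤ ∑ a, p a * q' a + c := by
  calc ∑ a, p a * q a ≤ ∑ a, p a * (q' a + c) :=
        Finset.sum_le_sum fun a _ => mul_le_mul_of_nonneg_left (h a) (hp.1 a)
    _ = _ := by simp only [mul_add, Finset.sum_add_distrib, ← Finset.sum_mul, hp.2, one_mul]

/-- Theorem 5, iterative regularized policy optimization part.  Starting from an
everywhere-positive policy `π 0` and iterating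
`π_{i+1}(a|s) = π_i(a|s)·exp(Q̄*_i(s,a)/α) / Σ_b π_i(b|s)·exp(Q̄*_i(s,b)/α)`, where
`Q̄*_i` is the fixed point of the soft `(N,k)`-pessimistic Bellman operator with
reference policy `π_i`, the unregularized fixed points `Q^{π_i}_{N,k}` are pointwise
nondecreasing in `i` and converge pointwise; moreover, whenever
`lim_i Q^{π_i}_{N,k}(s,a) > lim_i Q^{π_i}_{N,k}(s,a')`, the ratio
`π_i(a|s)/π_i(a'|s)` tends to infinity. -/
theorem iterative_regularized_policy_optimization
    {S A ι : Type*} [Fintype S] [Fintype A] [Fintype ι]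
    (r : S → A → ℝ) (γ : ℝ) (hγ0 : 0 ≤ γ) (hγ1 : γ < 1)
    (P : ι → ℝ) (hP : IsPMF P)
    (M : ι → S → A → S → ℝ) (hM : ∀ v s a, IsPMF (M v s a))
    (N : ℕ) (hN : 1 ≤ N) (k : ℕ) (hk1 : 1 ≤ k) (hkN : k ≤ N)
    (α : ℝ) (hα : 0 < α)
    (π : ℕ → S → A → ℝ) (hπ0 : ∀ s, IsPMF (π 0 s)) (hπ0pos : ∀ s a, 0 < π 0 s a)
    (Qstar : ℕ → S → A → ℝ)
    (hQstar : ∀ i, softBellman r γ P M (π i) α N ⟨k - 1, by omega⟩ (Qstar i) = Qstar i)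
    (hrec : ∀ i s a, π (i + 1) s a
      = π i s a * Real.exp (Qstar i s a / α) / ∑ b, π i s b * Real.exp (Qstar i s b / α))
    (Qfix : ℕ → S → A → ℝ)
    (hQfix : ∀ i, pessBellman r γ P M (π i) N ⟨k - 1, by omega⟩ (Qfix i) = Qfix i) :
    -- (i) pointwise nondecreasing and pointwise convergent
    ((∀ i s a, Qfix i s a ≤ Qfix (i + 1) s a) ∧
      (∀ s a, ∃ L : ℝ, Filter.Tendsto (fun i => Qfix i s a) Filter.atTop (nhds L))) ∧
    -- (ii) policy ratios diverge on strictly separated limits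
    (∀ s a a' (La La' : ℝ),
      Filter.Tendsto (fun i => Qfix i s a) Filter.atTop (nhds La) →
      Filter.Tendsto (fun i => Qfix i s a') Filter.atTop (nhds La') →
      La' < La →
      Filter.Tendsto (fun i => π i s a / π i s a') Filter.atTop Filter.atTop) := by
  have hπ : ∀ i, (∀ s, IsPMF (π i s)) ∧ (∀ s a, 0 < π i s a) := by
    intro i
    induction i with
    | zero => exact ⟨hπ0, hπ0pos⟩
    | succ i ih =>
      have hpos : ∀ s a, 0 < π (i + 1) s a := by
        intro s a
        rw [hrec]
        exact div_pos (mul_pos (ih.2 s a) (Real.exp_pos _))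
          (aux_jensen (π i s) (Qstar i s) (ih.1 s) (ih.2 s) α hα).1
      refine ⟨fun s => ⟨fun a => (hpos s a).le, ?_⟩, hpos⟩
      simp only [hrec]
      rw [← Finset.sum_div]
      exact div_self (aux_jensen (π i s) (Qstar i s) (ih.1 s) (ih.2 s) α hα).1.ne'
  have hlow : ∀ i s a, Qfix i s a ≤ Qstar i s a := by
    intro i s a
    refine aux_compare r γ hγ0 hγ1 P hP M hM N ⟨k - 1, by omega⟩
      (fun s' => ∑ a', π i s' a' * Qfix i s' a')
      (fun s' => α * Real.log (∑ a', π i s' a' * Real.exp (Qstar i s' a' / α)))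
      (Qfix i) (Qstar i) (hQfix i) (hQstar i) ?_ s a
    intro c hc s'
    have h1 := aux_avg (π i s') _ _ ((hπ i).1 s') c (hc s')
    have h2 := (aux_jensen (π i s') (Qstar i s') ((hπ i).1 s') ((hπ i).2 s') α hα).2.1
    show (∑ a', π i s' a' * Qfix i s' a') ≤ _ + c
    linarith
  have hup : ∀ i s a, Qstar i s a ≤ Qfix (i + 1) s a := by
    intro i s a
    refine aux_compare r γ hγ0 hγ1 P hP M hM N ⟨k - 1, by omega⟩
      (fun s' => α * Real.log (∑ a', π i s' a' * Real.exp (Qstar i s' a' / α)))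
      (fun s' => ∑ a', π (i + 1) s' a' * Qfix (i + 1) s' a')
      (Qstar i) (Qfix (i + 1)) (hQstar i) (hQfix (i + 1)) ?_ s a
    intro c hc s'
    have h1 := aux_avg (π (i + 1) s') _ _ ((hπ (i + 1)).1 s') c (hc s')
    have h2 := (aux_jensen (π i s') (Qstar i s') ((hπ i).1 s') ((hπ i).2 s') α hα).2.2
    simp only [← hrec] at h2
    exact h2.trans h1
  have hmono : ∀ i s a, Qfix i s a ≤ Qfix (i + 1) s a :=
    fun i s a => (hlow i s a).trans (hup i s a)
  have hconv : ∀ s a, ∃ L : ℝ, Filter.Tendsto (fun i => Qfix i s a) Filter.atTop (nhds L) := by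
    intro s a
    have hm : Monotone (fun i => Qfix i s a) := monotone_nat_of_le_succ fun i => hmono i s a
    haveI : Nonempty (S × A) := ⟨(s, a)⟩
    obtain ⟨p0, hp0⟩ := Finite.exists_max
      (fun p : S × A => auxT r γ P M N ⟨k - 1, by omega⟩ (fun _ => 0) p.1 p.2)
    set R := auxT r γ P M N ⟨k - 1, by omega⟩ (fun _ => 0) p0.1 p0.2
    refine ⟨_, tendsto_atTop_ciSup hm ⟨R / (1 - γ), ?_⟩⟩
    rintro _ ⟨i, rfl⟩
    obtain ⟨p, hp⟩ := Finite.exists_max (fun p : S × A => Qfix i p.1 p.2)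
    have hV : ∀ s', (∑ a', π i s' a' * Qfix i s' a') ≤ (fun _ => (0:ℝ)) s' + Qfix i p.1 p.2 := by
      intro s'
      have := aux_avg (π i s') (Qfix i s') (fun _ => 0) ((hπ i).1 s') (Qfix i p.1 p.2)
        (fun a' => by simpa using hp (s', a'))
      simpa using this
    have h1 := auxT_le r γ hγ0 P hP M hM N ⟨k - 1, by omega⟩ _ _ _ hV p.1 p.2
    have h2 : auxT r γ P M N ⟨k - 1, by omega⟩ (fun s' => ∑ a', π i s' a' * Qfix i s' a')
      = Qfix i := hQfix i
    rw [h2] at h1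
    have h3 := hp0 p
    have h4 := hp (s, a)
    simp only at h3 h4 ⊢
    rw [le_div_iff₀ (by linarith)]
    nlinarith
  refine ⟨⟨hmono, hconv⟩, ?_⟩
  intro s a a' La La' hLa hLa' hlt
  have hstar : ∀ b L, Filter.Tendsto (fun i => Qfix i s b) Filter.atTop (nhds L) →
      Filter.Tendsto (fun i => Qstar i s b) Filter.atTop (nhds L) := fun b L h =>
    tendsto_of_tendsto_of_tendsto_of_le_of_le h (h.comp (Filter.tendsto_add_atTop_nat 1))
      (fun i => hlow i s b) (fun i => hup i s b)
  have hdiff := (hstar a La hLa).sub (hstar a' La' hLa')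
  have hev := hdiff.eventually (lt_mem_nhds (show (La - La') / 2 < La - La' by linarith))
  obtain ⟨n, hn⟩ := Filter.eventually_atTop.1 hev
  have hratio : ∀ i, π (i + 1) s a / π (i + 1) s a'
      = π i s a / π i s a' * Real.exp ((Qstar i s a - Qstar i s a') / α) := by
    intro i
    have hZ := (aux_jensen (π i s) (Qstar i s) ((hπ i).1 s) ((hπ i).2 s) α hα).1
    rw [hrec i s a, hrec i s a', div_div_div_cancel_right₀ hZ.ne', sub_div, Real.exp_sub,
      mul_div_mul_comm]
  set δ := (La - La') / 2 / α with hδ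
  have hδ0 : 0 < δ := div_pos (by linarith) hα
  have hge : ∀ m, π n s a / π n s a' * Real.exp δ ^ m ≤ π (m + n) s a / π (m + n) s a' := by
    intro m
    induction m with
    | zero => simp
    | succ m ih =>
      rw [show m + 1 + n = (m + n) + 1 by ring, hratio, pow_succ, ← mul_assoc]
      refine mul_le_mul ih (Real.exp_le_exp.2 ?_) (Real.exp_pos _).le
        (div_pos ((hπ _).2 _ _) ((hπ _).2 _ _)).le
      exact div_le_div_of_nonneg_right (hn (m + n) (by omega)).le hα.le
  rw [← Filter.tendsto_add_atTop_iff_nat n]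
  refine Filter.tendsto_atTop_mono hge ?_
  exact (tendsto_pow_atTop_atTop_of_one_lt (Real.one_lt_exp_iff.2 hδ0)).const_mul_atTop
    (div_pos ((hπ _).2 _ _) ((hπ _).2 _ _))
end

section
/- (Theorem 2, order-statistic expectation identity) Let (Ω, 𝓕, P) be a probability space, let g : Ω → ℝ be measurable and integrable with respect to P, let N ≥ 1 and 1 ≤ k ≤ N be integers, let F(t) := P({ω : g(ω) ≤ t}) be the cumulative distribution function of g, and assume the law of g under P (the pushforward measure g_*P on ℝ) is atomless. Then ∫_{Ω^N} kmin_k( j ↦ g(ω_j) ) d(P^{⊗N})(ω) = (N! / ((k−1)!·(N−k)!)) · ∫_Ω g(ω) · F(g(ω))^{k−1} · (1 − F(g(ω)))^{N−k} dP(ω), where P^{⊗N} is the N-fold product measure on Ω^N. -/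
open MeasureTheory

/-- Indicator of `v < t` or of its complement. -/
noncomputable def osInd (b : Prop) [Decidable b] (t v : ℝ) : ℝ :=
  if b then (if v < t then 1 else 0) else (1 - if v < t then 1 else 0)

lemma osInd_bound (b : Prop) [Decidable b] (t v : ℝ) : ‖osInd b t v‖ ≤ 1 := by
  unfold osInd
  split_ifs <;> simp

lemma sort_card {N : ℕ} (x : Fin N → ℝ) (hx : Function.Injective x) (m : Fin N) :
    (Finset.univ.filter fun j => x j < x (Tuple.sort x m)).card = m := by
  have hmono : StrictMono (x ∘ Tuple.sort x) :=
    (Tuple.monotone_sort x).strictMono_of_injective (hx.comp (Tuple.sort x).injective)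
  have : (Finset.univ.filter fun j => x j < x (Tuple.sort x m))
      = (Finset.Iio m).map (Tuple.sort x).toEmbedding := by
    ext j
    obtain ⟨l, rfl⟩ := (Tuple.sort x).surjective j
    have := hmono.lt_iff_lt (a := l) (b := m)
    simpa using this
  rw [this]
  simp

lemma kmin_eq_sum {N : ℕ} (x : Fin N → ℝ) (hx : Function.Injective x) (m : Fin N) :
    kmin x m = ∑ i, x i * (if (Finset.univ.filter fun j => x j < x i).card = m then 1 else 0) := by
  rw [← Equiv.sum_comp (Tuple.sort x)]
  simp only [sort_card x hx, Fin.val_inj]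
  simp [kmin]

lemma ind_eq_sum {n : ℕ} (p : Fin n → ℝ) (t : ℝ) (m : ℕ) :
    (if (Finset.univ.filter fun j => p j < t).card = m then (1:ℝ) else 0)
      = ∑ S ∈ Finset.powersetCard m (Finset.univ : Finset (Fin n)),
          ∏ j, osInd (j ∈ S) t (p j) := by
  have h : ∀ S : Finset (Fin n), ∏ j, osInd (j ∈ S) t (p j)
      = if (Finset.univ.filter fun j => p j < t) = S then 1 else 0 := by
    intro S
    split_ifs with h
    · apply Finset.prod_eq_one
      intro j _
      subst h
      by_cases hj : p j < t <;> simp [osInd, hj]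
    · have : ∃ j, ¬ (p j < t ↔ j ∈ S) := by
        by_contra! hc
        apply h
        ext j
        simpa using hc j
      obtain ⟨j, hj⟩ := this
      apply Finset.prod_eq_zero (Finset.mem_univ j)
      unfold osInd
      split_ifs <;> simp_all
  simp only [h]
  rw [Finset.sum_ite_eq]
  simp [Finset.mem_powersetCard]

lemma kmin_eq_sum' {n : ℕ} (x : Fin (n+1) → ℝ) (hx : Function.Injective x) (m : Fin (n+1)) :
    kmin x m = ∑ i, ∑ S ∈ Finset.powersetCard m (Finset.univ : Finset (Fin n)),
      x i * ∏ j, osInd (j ∈ S) (x i) (x (i.succAbove j)) := by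
  rw [kmin_eq_sum x hx]
  refine Finset.sum_congr rfl fun i _ => ?_
  rw [← Finset.mul_sum, ← ind_eq_sum (fun j => x (i.succAbove j))]
  congr 3
  rw [Finset.card_filter, Finset.card_filter, Fin.sum_univ_succAbove _ i]
  simp

lemma osInd_measurable (b : Prop) [Decidable b] :
    Measurable (fun p : ℝ × ℝ => osInd b p.1 p.2) := by
  have : Measurable (fun p : ℝ × ℝ => if p.2 < p.1 then (1:ℝ) else 0) :=
    Measurable.ite (measurableSet_lt measurable_snd measurable_fst) measurable_const
      measurable_const
  unfold osInd
  split_ifs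
  · exact this
  · exact measurable_const.sub this

section
variable {Ω : Type*} [MeasurableSpace Ω] (P : Measure Ω) [IsProbabilityMeasure P]
    (g : Ω → ℝ)

lemma ae_inj (hg : Measurable g) (n : ℕ) (hatomless : ∀ t : ℝ, P {ω | g ω = t} = 0) :
    ∀ᵐ ω ∂(Measure.pi fun _ : Fin (n+1) => P), Function.Injective (fun j => g (ω j)) := by
  have key : ∀ (i : Fin (n+1)) (j : Fin n), ∀ᵐ ω ∂(Measure.pi fun _ : Fin (n+1) => P),
      g (ω (i.succAbove j)) ≠ g (ω i) := by
    intro i j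
    have hmp := measurePreserving_piFinSuccAbove (fun _ : Fin (n+1) => P) i
    have : ∀ᵐ p ∂(P.prod (Measure.pi fun _ : Fin n => P)), g (p.2 j) ≠ g p.1 := by
      have hms : MeasurableSet {p : Ω × (Fin n → Ω) | g (p.2 j) ≠ g p.1} :=
        (measurableSet_eq_fun (by fun_prop) (by fun_prop)).compl
      rw [Measure.ae_prod_iff_ae_ae hms]
      refine Filter.Eventually.of_forall fun a => ?_
      have h1 : ∀ᵐ b ∂P, g b ≠ g a := by
        rw [ae_iff]
        simpa using hatomless (g a)
      exact (measurePreserving_eval (fun _ : Fin n => P) j).quasiMeasurePreserving.ae h1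
    exact hmp.quasiMeasurePreserving.ae this
  have : ∀ᵐ ω ∂(Measure.pi fun _ : Fin (n+1) => P), ∀ i j,
      g (ω (Fin.succAbove i j)) ≠ g (ω i) := by
    rw [ae_all_iff]; intro i; rw [ae_all_iff]; exact key i
  filter_upwards [this] with ω h a b hab
  by_contra hne
  obtain ⟨j, rfl⟩ := Fin.exists_succAbove_eq hne
  exact h b j hab

lemma term_integrable (hg : Measurable g) (hint : Integrable g P) (n : ℕ) (i : Fin (n+1))
    (S : Finset (Fin n)) :
    Integrable (fun p : Ω × (Fin n → Ω) => g p.1 * ∏ j, osInd (j ∈ S) (g p.1) (g (p.2 j)))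
      (P.prod (Measure.pi fun _ : Fin n => P)) := by
  refine (hint.comp_fst _).mul_bdd (c := 1) ?_ ?_
  · apply Measurable.aestronglyMeasurable
    refine Finset.measurable_prod _ fun j _ => ?_
    exact (osInd_measurable (j ∈ S)).comp
      (f := fun p : Ω × (Fin n → Ω) => (g p.1, g (p.2 j))) (by fun_prop)
  · refine Filter.Eventually.of_forall fun p => ?_
    rw [norm_prod]
    exact Finset.prod_le_one (fun _ _ => norm_nonneg _) fun j _ => osInd_bound _ _ _

lemma osInd_integral (hg : Measurable g) (hatomless : ∀ t : ℝ, P {ω | g ω = t} = 0)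
    (b : Prop) [Decidable b] (t : ℝ) :
    ∫ ω, osInd b t (g ω) ∂P
      = if b then (P {ω' | g ω' ≤ t}).toReal else 1 - (P {ω' | g ω' ≤ t}).toReal := by
  have hms : MeasurableSet {ω | g ω < t} := measurableSet_lt hg measurable_const
  have hF : P {ω | g ω < t} = P {ω | g ω ≤ t} := by
    apply measure_congr
    have h1 : ∀ᵐ b ∂P, g b ≠ t := by
      rw [ae_iff]
      simpa using hatomless t
    filter_upwards [h1] with ω h
    apply propext
    exact ⟨fun h' => le_of_lt h', fun h' => lt_of_le_of_ne h' h⟩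
  have heq : (fun ω => if g ω < t then (1:ℝ) else 0) = Set.indicator {ω | g ω < t} 1 := by
    ext ω
    simp [Set.indicator]
  have h1 : ∫ ω, (if g ω < t then (1:ℝ) else 0) ∂P = (P {ω' | g ω' ≤ t}).toReal := by
    rw [heq, integral_indicator_one hms, ← hF]
    rfl
  have hi : Integrable (fun ω => if g ω < t then (1:ℝ) else 0) P := by
    rw [heq]
    exact (integrable_const (1:ℝ)).indicator hms
  unfold osInd
  split_ifs
  · exact h1
  · rw [integral_sub (integrable_const _) hi, h1]
    simp

lemma term_integral (hg : Measurable g) (hint : Integrable g P)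
    (hatomless : ∀ t : ℝ, P {ω | g ω = t} = 0) (n : ℕ) (i : Fin (n+1))
    (S : Finset (Fin n)) :
    ∫ ω : Fin (n+1) → Ω, g (ω i) * ∏ j, osInd (j ∈ S) (g (ω i)) (g (ω (i.succAbove j)))
      ∂(Measure.pi fun _ : Fin (n+1) => P)
    = ∫ ω, g ω * (P {ω' | g ω' ≤ g ω}).toReal ^ S.card
            * (1 - (P {ω' | g ω' ≤ g ω}).toReal) ^ (n - S.card) ∂P := by
  have hmp := measurePreserving_piFinSuccAbove (fun _ : Fin (n+1) => P) i
  have h := hmp.integral_comp (MeasurableEquiv.measurableEmbedding _)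
    (fun p : Ω × (Fin n → Ω) => g p.1 * ∏ j, osInd (j ∈ S) (g p.1) (g (p.2 j)))
  refine Eq.trans h ?_
  rw [integral_prod _ (term_integrable P g hg hint n i S)]
  refine integral_congr_ae (Filter.Eventually.of_forall fun a => ?_)
  simp only
  rw [integral_const_mul,
    integral_fintype_prod_eq_prod (fun (j : Fin n) (b : Ω) => osInd (j ∈ S) (g a) (g b))]
  simp only [osInd_integral P g hg hatomless]
  rw [Finset.prod_ite, Finset.prod_const, Finset.prod_const, mul_assoc]
  have h2 : (Finset.univ.filter fun j => j ∉ S) = Sᶜ := by ext; simp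
  rw [h2, Finset.card_compl]
  simp
end

/-- Theorem 2, order-statistic expectation identity.  For a probability space `(Ω, P)`,
an integrable measurable `g : Ω → ℝ` whose law is atomless, and integers `1 ≤ k ≤ N`,
the expectation of the `k`-th order statistic of `N` i.i.d. draws of `g` equals
`(N!/((k−1)!(N−k)!)) · ∫ g(ω)·F(g(ω))^{k−1}·(1−F(g(ω)))^{N−k} dP(ω)`, where
`F(t) = P(g ≤ t)` is the cumulative distribution function of `g`. -/
theorem orderStatistic_expectation {Ω : Type*} [MeasurableSpace Ω]
    (P : Measure Ω) [IsProbabilityMeasure P]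
    (g : Ω → ℝ) (hg : Measurable g) (hint : Integrable g P)
    (N k : ℕ) (hN : 1 ≤ N) (hk1 : 1 ≤ k) (hkN : k ≤ N)
    (hatomless : ∀ t : ℝ, P {ω | g ω = t} = 0) :
    ∫ ω : Fin N → Ω, kmin (fun j => g (ω j)) ⟨k - 1, by omega⟩
        ∂(Measure.pi fun _ : Fin N => P)
      = ((N.factorial : ℝ) / ((k - 1).factorial * (N - k).factorial))
        * ∫ ω, g ω * (P {ω' | g ω' ≤ g ω}).toReal ^ (k - 1)
            * (1 - (P {ω' | g ω' ≤ g ω}).toReal) ^ (N - k) ∂P := by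
  obtain ⟨n, rfl⟩ : ∃ n, N = n + 1 := ⟨N - 1, by omega⟩
  obtain ⟨m, rfl⟩ : ∃ m, k = m + 1 := ⟨k - 1, by omega⟩
  have hmn : m ≤ n := by omega
  have hI : ∀ (i : Fin (n+1)) (S : Finset (Fin n)), Integrable (fun ω : Fin (n+1) → Ω =>
      g (ω i) * ∏ j, osInd (j ∈ S) (g (ω i)) (g (ω (i.succAbove j))))
      (Measure.pi fun _ : Fin (n+1) => P) := fun i S =>
    (measurePreserving_piFinSuccAbove (fun _ : Fin (n+1) => P) i).integrable_comp_of_integrable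
      (term_integrable P g hg hint n i S)
  rw [integral_congr_ae ((ae_inj P g hg n hatomless).mono fun ω h => kmin_eq_sum' _ h _)]
  rw [integral_finsetSum _ fun i _ => integrable_finsetSum _ fun S _ => hI i S]
  have hT : ∀ i : Fin (n+1), (∫ ω : Fin (n+1) → Ω,
      ∑ S ∈ Finset.powersetCard m (Finset.univ : Finset (Fin n)),
      g (ω i) * ∏ j, osInd (j ∈ S) (g (ω i)) (g (ω (i.succAbove j)))
      ∂(Measure.pi fun _ : Fin (n+1) => P))
      = (n.choose m : ℝ) * ∫ ω, g ω * (P {ω' | g ω' ≤ g ω}).toReal ^ m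
            * (1 - (P {ω' | g ω' ≤ g ω}).toReal) ^ (n - m) ∂P := by
    intro i
    rw [integral_finsetSum _ fun S _ => hI i S]
    rw [Finset.sum_congr rfl (g := fun _ => ∫ ω, g ω * (P {ω' | g ω' ≤ g ω}).toReal ^ m
            * (1 - (P {ω' | g ω' ≤ g ω}).toReal) ^ (n - m) ∂P)]
    · simp
    · intro S hS
      rw [term_integral P g hg hint hatomless, (Finset.mem_powersetCard.1 hS).2]
  refine (Finset.sum_congr rfl fun i _ => hT i).trans ?_
  simp only [Nat.add_sub_cancel, Nat.add_sub_add_right, Finset.sum_const, Finset.card_univ,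
    Fintype.card_fin, nsmul_eq_mul]
  rw [← mul_assoc]
  congr 1
  rw [Nat.cast_choose ℝ hmn, Nat.factorial_succ]
  push_cast
  ring
end
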